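/- Let m and n be nonnegative integers with m+n ≥ 2. Then for every pair of positions 1 ≤ a < b ≤ m+n, the signed count ∑_{σ ∈ W(m,n)} (−1)^{σ(a)+σ(b)} is independent of a and b and equals the integer d determined by m!·n!·d = (m+n−2)!·(m² − m + n² − n − 2mn). (This is the combinatorial content of the homogeneity theorem: the total exponent of each factor in the product of the Pandharipande–Thomas partition functions over all crepant resolutions of the generalised conifold C_{m,n} is −k·d.) -/

import Mathlib

open Finset

/-- `W L m n` is the set of binary words `σ : Fin L → Fin 2` taking the value `0`
exactly `m` times and the value `1` exactly `n` times.  For `L = m + n` these encode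
the crepant resolutions of the generalised conifold `C_{m,n}`. -/
def W (L m n : ℕ) : Finset (Fin L → Fin 2) :=
  Finset.univ.filter (fun σ =>
    (Finset.univ.filter (fun i => σ i = 0)).card = m ∧
    (Finset.univ.filter (fun i => σ i = 1)).card = n)

/-!
The set of words is stable under permutations of the positions, and permutations act transitively
on ordered pairs of distinct positions, so the signed count `S` does not depend on the pair. Summing
over all ordered pairs of distinct positions, a word with sign sum `m - n` contributes
`(m - n)² - (m + n)`; hence `(m + n)(m + n - 1) S = |W| ((m - n)² - (m + n))`, where
`|W| = (m + n)! / (m! n!)`.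
-/

section PermInvariant

variable {ι α R M : Type*} {S : Finset (ι → α)}

theorem sum_apply_pair_eq_of_comp_perm_mem [AddCommMonoid M]
    (hS : ∀ p : Equiv.Perm ι, ∀ σ ∈ S, σ ∘ p ∈ S) (f : α → α → M) {a b c d : ι}
    (hab : a ≠ b) (hcd : c ≠ d) :
    ∑ σ ∈ S, f (σ a) (σ b) = ∑ σ ∈ S, f (σ c) (σ d) := by
  obtain ⟨p, hpa, hpb⟩ := MulAction.is_two_pretransitive_iff.mp
    (Equiv.Perm.isMultiplyPretransitive ι 2) hcd hab
  rw [Equiv.Perm.smul_def] at hpa hpb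
  exact sum_nbij' (· ∘ p) (· ∘ p.symm) (hS p) (hS p.symm)
    (fun σ _ ↦ by simp [Function.comp_assoc]) (fun σ _ ↦ by simp [Function.comp_assoc])
    (fun σ _ ↦ by simp [hpa, hpb])

theorem sum_univ_offDiag_mul_eq_sq_sub [Fintype ι] [Ring R] (x : ι → R) :
    ∑ p ∈ (univ : Finset ι).offDiag, x p.1 * x p.2 = (∑ i, x i) ^ 2 - ∑ i, x i ^ 2 := by
  classical
  rw [eq_sub_iff_add_eq', sq, sum_mul_sum, ← sum_product', ← diag_union_offDiag,
    sum_union (disjoint_diag_offDiag _), sum_diag]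
  simp only [sq]

theorem descFactorial_card_two_mul_sum_apply_mul_apply [Fintype ι] [Ring R]
    (hS : ∀ p : Equiv.Perm ι, ∀ σ ∈ S, σ ∘ p ∈ S) (g : α → R) {a b : ι} (hab : a ≠ b) :
    ((Fintype.card ι).descFactorial 2 : R) * ∑ σ ∈ S, g (σ a) * g (σ b) =
      ∑ σ ∈ S, ((∑ i, g (σ i)) ^ 2 - ∑ i, g (σ i) ^ 2) := by
  have card_offDiag : #(univ : Finset ι).offDiag = (Fintype.card ι).descFactorial 2 := by
    simp [offDiag_card, Nat.descFactorial_succ, Nat.sub_one_mul]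
  calc _ = ∑ _p ∈ (univ : Finset ι).offDiag, ∑ σ ∈ S, g (σ a) * g (σ b) := by
        rw [sum_const, nsmul_eq_mul, card_offDiag]
    _ = ∑ p ∈ (univ : Finset ι).offDiag, ∑ σ ∈ S, g (σ p.1) * g (σ p.2) :=
        sum_congr rfl fun p hp ↦ sum_apply_pair_eq_of_comp_perm_mem hS
          (fun x y ↦ g x * g y) hab (mem_offDiag.mp hp).2.2
    _ = ∑ σ ∈ S, ∑ p ∈ (univ : Finset ι).offDiag, g (σ p.1) * g (σ p.2) := sum_comm
    _ = _ := sum_congr rfl fun σ _ ↦ sum_univ_offDiag_mul_eq_sq_sub fun i ↦ g (σ i)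

end PermInvariant

section Words

variable {L m n : ℕ} {σ : Fin L → Fin 2}

theorem mem_W : σ ∈ W L m n ↔ #{i | σ i = 0} = m ∧ #{i | σ i = 1} = n := by
  simp [W]

theorem comp_perm_mem_W (p : Equiv.Perm (Fin L)) (hσ : σ ∈ W L m n) : σ ∘ p ∈ W L m n := by
  have card_fiber (c : Fin 2) : #{i | (σ ∘ p) i = c} = #{i | σ i = c} :=
    card_equiv p (by simp)
  simpa only [mem_W, card_fiber] using hσ

theorem sum_apply_of_mem_W {M : Type*} [AddCommMonoid M] (hσ : σ ∈ W L m n) (g : Fin 2 → M) :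
    ∑ i, g (σ i) = m • g 0 + n • g 1 := by
  obtain ⟨hm, hn⟩ := mem_W.mp hσ
  rw [← sum_fiberwise' univ σ g, Fin.sum_univ_two, sum_const, sum_const, hm, hn]

theorem card_W (m n : ℕ) : #(W (m + n) m n) = (m + n).choose m := by
  have card_words : #(W (m + n) m n) = #(powersetCard m (univ : Finset (Fin (m + n)))) := by
    refine card_nbij' (fun σ ↦ ({i | σ i = 0} : Finset _)) (fun s i ↦ if i ∈ s then 0 else 1)
      (fun σ hσ ↦ ?_) (fun s hs ↦ ?_) (fun σ _ ↦ ?_) (fun s _ ↦ ?_)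
    · exact mem_powersetCard_univ.mpr (mem_W.mp hσ).1
    · have hs_card : #s = m := mem_powersetCard_univ.mp hs
      have card_ones : #{i | i ∉ s} = n := by
        rw [filter_notMem_eq_sdiff, ← compl_eq_univ_sdiff, card_compl, Fintype.card_fin, hs_card,
          Nat.add_sub_cancel_left]
      exact mem_W.mpr (by simp [hs_card, card_ones])
    · funext i
      obtain h | h : σ i = 0 ∨ σ i = 1 := by lia
      all_goals simp [h]
    · ext i
      simp
  rw [card_words, card_powersetCard, card_univ, Fintype.card_fin]

theorem card_W_mul_factorial_mul_factorial (m n : ℕ) :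
    #(W (m + n) m n) * m.factorial * n.factorial = (m + n).factorial := by
  rw [card_W, Nat.choose_symm_add, Nat.add_choose_mul_factorial_mul_factorial]

theorem descFactorial_two_mul_signed_count {a b : Fin L} (hab : a ≠ b) :
    (L.descFactorial 2 : ℤ) * ∑ σ ∈ W L m n, (-1 : ℤ) ^ ((σ a : ℕ) + (σ b : ℕ)) =
      #(W L m n) * (((m : ℤ) - n) ^ 2 - L) := by
  have sum_sign {σ : Fin L → Fin 2} (hσ : σ ∈ W L m n) :
      ∑ i, (-1 : ℤ) ^ (σ i : ℕ) = m - n := by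
    simpa [sub_eq_add_neg] using sum_apply_of_mem_W hσ fun c ↦ (-1 : ℤ) ^ (c : ℕ)
  have sum_sign_sq (σ : Fin L → Fin 2) : ∑ i, ((-1 : ℤ) ^ (σ i : ℕ)) ^ 2 = L := by
    simp [← pow_mul']
  have double_count := descFactorial_card_two_mul_sum_apply_mul_apply (S := W L m n)
    (fun p _ ↦ comp_perm_mem_W p) (fun c ↦ (-1 : ℤ) ^ (c : ℕ)) hab
  simp only [Fintype.card_fin, ← pow_add] at double_count
  rw [double_count, ← nsmul_eq_mul]
  exact sum_eq_card_nsmul fun σ hσ ↦ by rw [sum_sign hσ, sum_sign_sq]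

end Words

/-- For `m + n ≥ 2`, the signed count `∑_{σ ∈ W(m,n)} (−1)^{σ(a)+σ(b)}` over all words
encoding crepant resolutions of `C_{m,n}` is, for every pair of positions `a < b`,
equal to the integer `d` determined by
`m!·n!·d = (m+n−2)!·(m² − m + n² − n − 2mn)`; in particular it is independent of `a, b`. -/
theorem signed_count_eq_degree (m n : ℕ) (h2 : 2 ≤ m + n)
    (d : ℤ)
    (hd : (m.factorial : ℤ) * (n.factorial : ℤ) * d
        = ((m + n - 2).factorial : ℤ) *
            ((m : ℤ) ^ 2 - (m : ℤ) + (n : ℤ) ^ 2 - (n : ℤ) - 2 * (m : ℤ) * (n : ℤ)))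
    (a b : Fin (m + n)) (hab : a < b) :
    ∑ σ ∈ W (m + n) m n, (-1 : ℤ) ^ ((σ a : ℕ) + (σ b : ℕ)) = d := by
  set S := ∑ σ ∈ W (m + n) m n, (-1 : ℤ) ^ ((σ a : ℕ) + (σ b : ℕ))
  set N := (m + n).descFactorial 2
  have count : N * S = #(W (m + n) m n) * (((m : ℤ) - n) ^ 2 - (m + n)) :=
    mod_cast descFactorial_two_mul_signed_count hab.ne
  have card_words : (#(W (m + n) m n) * m.factorial * n.factorial : ℤ) =
      (m + n - 2).factorial * N := by
    exact_mod_cast (card_W_mul_factorial_mul_factorial m n).trans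
      (Nat.factorial_mul_descFactorial h2).symm
  have hN : (N : ℤ) ≠ 0 := mod_cast (Nat.descFactorial_pos.mpr h2).ne'
  have hfact : (m.factorial * n.factorial : ℤ) ≠ 0 := by positivity
  refine mul_left_cancel₀ hN (mul_left_cancel₀ hfact ?_)
  calc (m.factorial * n.factorial : ℤ) * (N * S)
      = #(W (m + n) m n) * m.factorial * n.factorial * (((m : ℤ) - n) ^ 2 - (m + n)) := by
        rw [count]; ring
    _ = N * ((m + n - 2).factorial * (m ^ 2 - m + n ^ 2 - n - 2 * m * n)) := by
        rw [card_words]; ring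
    _ = m.factorial * n.factorial * (N * d) := by rw [← hd]; ring
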